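/- If α is a real algebraic number that is irrational, then the complex number e^{2πiα} = Complex.exp(2πiα) is transcendental over ℚ. -/

import Mathlib

open Finset in
lemma gs_div_one (F : ℂ → ℂ) (hF : Differentiable ℂ F) (c : ℂ) (r : ℕ)
    (h : (r : ℕ∞) ≤ analyticOrderAt F c) :
    ∃ G : ℂ → ℂ, Differentiable ℂ G ∧ ∀ z, F z = (z - c) ^ r * G z := by
  induction r with
  | zero => exact ⟨F, hF, by simp⟩
  | succ r ih =>
    obtain ⟨G, hG, hFG⟩ := ih (le_trans (by exact_mod_cast Nat.le_succ r) h)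
    have hGa : AnalyticAt ℂ G c := hG.analyticAt c
    have hord : analyticOrderAt F c = r + analyticOrderAt G c := by
      have : F = (fun z => z - c) ^ r * G := by
        ext z; simp [hFG z]
      rw [this, analyticOrderAt_mul (by fun_prop) hGa, analyticOrderAt_pow (by fun_prop)]
      have h1 : analyticOrderAt (fun z : ℂ => z - c) c = 1 := analyticOrderAt_id_sub_const_self
      rw [h1]; simp
    have hGc : G c = 0 := by
      rw [← hGa.analyticOrderAt_ne_zero]
      intro h0
      rw [hord, h0] at h
      simp only [add_zero, Nat.cast_le] at h
      omega
    refine ⟨dslope G c, ?_, fun z => ?_⟩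
    · rw [← differentiableOn_univ, Complex.differentiableOn_dslope Filter.univ_mem]
      exact hG.differentiableOn
    · rw [hFG z, pow_succ, mul_assoc]
      congr 1
      have := sub_smul_dslope G c z
      simp only [smul_eq_mul, hGc, sub_zero] at this
      exact this.symm

open Finset in
lemma gs_div_all (F : ℂ → ℂ) (hF : Differentiable ℂ F) (r : ℕ) (s : Finset ℕ)
    (h : ∀ l ∈ s, (r : ℕ∞) ≤ analyticOrderAt F (l : ℂ)) :
    ∃ G : ℂ → ℂ, Differentiable ℂ G ∧ ∀ z, F z = (∏ l ∈ s, (z - (l : ℂ)) ^ r) * G z := by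
  classical
  induction s using Finset.induction_on with
  | empty => exact ⟨F, hF, by simp⟩
  | insert a s ha ih =>
    obtain ⟨G, hG, hFG⟩ := ih (fun l hl => h l (Finset.mem_insert_of_mem hl))
    have hord : analyticOrderAt F (a : ℂ) = analyticOrderAt G (a : ℂ) := by
      have : F = (fun z => ∏ l ∈ s, (z - (l : ℂ)) ^ r) * G := by
        ext z; simp [hFG z]
      have hd : Differentiable ℂ (fun z : ℂ => ∏ l ∈ s, (z - (l : ℂ)) ^ r) := by fun_prop
      rw [this, analyticOrderAt_mul (hd.analyticAt _) (hG.analyticAt _)]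
      rw [(hd.analyticAt _).analyticOrderAt_eq_zero.2, zero_add]
      rw [Finset.prod_ne_zero_iff]
      intro l hl
      apply pow_ne_zero
      rw [sub_ne_zero]
      intro hh
      have : a = l := by exact_mod_cast hh
      exact ha (this ▸ hl)
    obtain ⟨G', hG', hGG'⟩ := gs_div_one G hG a r (hord ▸ h a (Finset.mem_insert_self _ _))
    refine ⟨G', hG', fun z => ?_⟩
    rw [hFG, hGG', Finset.prod_insert ha]; ring

lemma gs_analytic (F : ℂ → ℂ) (hF : Differentiable ℂ F) (m r : ℕ)
    (h : ∀ l < m, ∀ k < r, iteratedDeriv k F (l : ℂ) = 0) (R B : ℝ) (hR : (m : ℝ) < R)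
    (hB : ∀ z : ℂ, ‖z‖ = R → ‖F z‖ ≤ B) (l₀ : ℕ) (hl₀ : l₀ < m) :
    ‖iteratedDeriv r F (l₀ : ℂ)‖ ≤
      (r.factorial : ℝ) * ((m : ℝ) ^ (m * r) * (B / (R - m) ^ (m * r))) := by
  obtain ⟨G, hG, hFG⟩ := gs_div_all F hF r (Finset.range m) (fun l hl => by
    rw [natCast_le_analyticOrderAt_iff_iteratedDeriv_eq_zero (hF.analyticAt _)]
    exact h l (Finset.mem_range.1 hl))
  have hm0 : (0 : ℝ) ≤ m := Nat.cast_nonneg m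
  have hR0 : 0 < R := lt_of_le_of_lt hm0 hR
  have hRm : 0 < R - m := by linarith
  have hGs : ∀ z : ℂ, ‖z‖ = R → ‖G z‖ ≤ B / (R - m) ^ (m * r) := by
    intro z hz
    rw [le_div_iff₀ (by positivity)]
    refine le_trans ?_ (hB z hz)
    rw [hFG, norm_mul, mul_comm, norm_prod]
    gcongr
    calc (R - m) ^ (m * r) = ∏ l ∈ Finset.range m, (R - m) ^ r := by
          rw [Finset.prod_const, Finset.card_range, ← pow_mul, mul_comm]
      _ ≤ _ := by
          apply Finset.prod_le_prod
          · intros; positivity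
          · intro l hl
            rw [norm_pow]
            gcongr
            have h1 := norm_sub_norm_le z (l : ℂ)
            rw [hz, Complex.norm_natCast] at h1
            have h2 : (l : ℝ) ≤ m := by exact_mod_cast (Finset.mem_range.1 hl).le
            linarith
  have hGb : ∀ z : ℂ, ‖z‖ ≤ R → ‖G z‖ ≤ B / (R - m) ^ (m * r) := by
    intro z hz
    apply Complex.norm_le_of_forall_mem_frontier_norm_le (U := Metric.ball (0 : ℂ) R)
      Metric.isBounded_ball hG.diffContOnCl
    · intro w hw
      rw [frontier_ball (0 : ℂ) hR0.ne'] at hw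
      exact hGs w (by simpa using hw)
    · rw [closure_ball (0 : ℂ) hR0.ne']
      simpa using hz
  have := Complex.norm_iteratedDeriv_le_of_forall_mem_sphere_norm_le (c := (l₀ : ℂ)) (R := 1)
    (C := (m : ℝ) ^ (m * r) * (B / (R - m) ^ (m * r))) (f := F) r one_pos
    hF.diffContOnCl (by
      intro z hz
      have hz1 : ‖z - l₀‖ = 1 := by simpa [dist_eq_norm] using hz
      have hlm : (l₀ : ℝ) + 1 ≤ m := by exact_mod_cast hl₀
      have hzR : ‖z‖ ≤ R := by
        have := norm_sub_norm_le z (l₀ : ℂ)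
        rw [Complex.norm_natCast] at this
        linarith
      rw [hFG, norm_mul, norm_prod]
      gcongr
      · calc _ ≤ ∏ l ∈ Finset.range m, (m : ℝ) ^ r := by
              apply Finset.prod_le_prod
              · intros; positivity
              · intro l hl
                rw [norm_pow]
                gcongr
                have h2 : l + 1 ≤ m := (Finset.mem_range.1 hl)
                calc ‖z - l‖ = ‖(z - l₀) + (((l₀ : ℤ) - (l : ℤ) : ℤ) : ℂ)‖ := by
                      congr 1; push_cast; ring
                  _ ≤ 1 + |(((l₀ : ℤ) - (l : ℤ) : ℤ) : ℝ)| := by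
                      refine (norm_add_le _ _).trans ?_
                      rw [hz1, Complex.norm_intCast]
                  _ ≤ m := by
                      rw [← Int.cast_abs]
                      have : 1 + |(l₀ : ℤ) - (l : ℤ)| ≤ m := by
                        have : |(l₀ : ℤ) - (l : ℤ)| ≤ m - 1 := by
                          rw [abs_le]; constructor <;> omega
                        omega
                      exact_mod_cast this
          _ = _ := by rw [Finset.prod_const, Finset.card_range, ← pow_mul, mul_comm]
      · exact hGb z hzR)
  simpa using this

lemma gs_siegel (K : Type*) [Field K] [NumberField K] : ∃ C : ℝ, ∀ (ι κ : Type) [Fintype ι]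
    [Fintype κ] (M : Matrix ι κ (NumberField.RingOfIntegers K)) (A : ℝ), M ≠ 0 →
    0 < Fintype.card ι → Fintype.card κ = 2 * Fintype.card ι →
    (∀ k l, NumberField.house (algebraMap (NumberField.RingOfIntegers K) K (M k l)) ≤ A) →
    ∃ ξ : κ → NumberField.RingOfIntegers K, ξ ≠ 0 ∧ M.mulVec ξ = 0 ∧
      ∀ l, NumberField.house (algebraMap (NumberField.RingOfIntegers K) K (ξ l)) ≤
        C * (C * (Fintype.card κ) * A) := by
  classical
  refine ⟨?C, fun ι κ _ _ M A hM hp hq hA => ?_⟩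
  rotate_left
  obtain ⟨ξ, h1, h2, h3⟩ := NumberField.house.exists_ne_zero_int_vec_house_le K M hM hp
    (q := Fintype.card κ) (by omega) rfl hA rfl
  refine ⟨ξ, h1, h2, fun l => ?_⟩
  have h4 := h3 l
  have h5 : ((Fintype.card ι : ℝ) / ((Fintype.card κ : ℝ) - Fintype.card ι)) = 1 := by
    rw [hq]; push_cast
    have : (Fintype.card ι : ℝ) ≠ 0 := by positivity
    field_simp; ring
  rw [h5, Real.rpow_one] at h4
  exact h4

lemma gs_vandermonde {K ι : Type*} [Field K] [Fintype ι] (v : ι → K)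
    (hv : Function.Injective v) (p : ι → K) (h : ∀ k : ℕ, ∑ i, v i ^ k * p i = 0) : p = 0 := by
  classical
  have h1 : ∀ P : Polynomial K, ∑ i, P.eval (v i) * p i = 0 := by
    intro P
    simp_rw [Polynomial.eval_eq_sum_range, Finset.sum_mul]
    rw [Finset.sum_comm]
    apply Finset.sum_eq_zero
    intro k _
    simp_rw [mul_assoc]
    rw [← Finset.mul_sum, h, mul_zero]
  ext i
  have h2 := h1 (∏ j ∈ Finset.univ.erase i, (Polynomial.X - Polynomial.C (v j)))
  rw [Finset.sum_eq_single i] at h2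
  · rw [mul_eq_zero] at h2
    rcases h2 with h2 | h2
    · exfalso
      rw [Polynomial.eval_prod, Finset.prod_eq_zero_iff] at h2
      obtain ⟨j, hj, hj2⟩ := h2
      simp only [Polynomial.eval_sub, Polynomial.eval_X, Polynomial.eval_C, sub_eq_zero] at hj2
      exact (Finset.mem_erase.1 hj).1 (hv hj2).symm
    · exact h2
  · intro j _ hj
    rw [Polynomial.eval_prod, Finset.prod_eq_zero (Finset.mem_erase.2 ⟨hj, Finset.mem_univ _⟩),
      zero_mul]
    simp
  · simp

lemma gs_iterDeriv {ι : Type*} [Fintype ι] (p w : ι → ℂ) (k : ℕ) (z : ℂ) :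
    iteratedDeriv k (fun z => ∑ i, p i * Complex.exp (w i * z)) z =
      ∑ i, p i * (w i ^ k * Complex.exp (w i * z)) := by
  rw [iteratedDeriv_fun_sum (fun i _ => by
    apply ContDiff.contDiffAt; fun_prop)]
  apply Finset.sum_congr rfl
  intro i _
  rw [iteratedDeriv_const_mul_field]
  rw [iteratedDeriv_cexp_const_mul]

lemma gs_int (K : Type*) [Field K] [NumberField K] (x y : K) :
    ∃ (c : ℤ) (X Y : NumberField.RingOfIntegers K), c ≠ 0 ∧ (X : K) = c * x ∧ (Y : K) = c * y := by
  classical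
  obtain ⟨c, hc, h⟩ := exists_integral_multiples ℤ ℚ (L := K) {x, y}
  have hx := h x (by simp)
  have hy := h y (by simp)
  refine ⟨c, ⟨c • x, hx⟩, ⟨c • y, hy⟩, hc, ?_, ?_⟩ <;> simp

/-- The coefficient attached to the indices. -/
noncomputable def gsCoef {K : Type*} [Field K] [NumberField K]
    (c : ℤ) (X Y : NumberField.RingOfIntegers K) (Q k l a b : ℕ) : NumberField.RingOfIntegers K :=
  ((c : NumberField.RingOfIntegers K) * a + b * X) ^ k * (c ^ (Q - b * l) * Y ^ (b * l))

lemma gs_coef_eq {K : Type*} [Field K] [NumberField K]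
    (c : ℤ) (X Y : NumberField.RingOfIntegers K) (x y : K) (hX : (X : K) = c * x)
    (hY : (Y : K) = c * y) (Q k l a b : ℕ) (h : b * l ≤ Q) :
    ((gsCoef c X Y Q k l a b : NumberField.RingOfIntegers K) : K) =
      (c : K) ^ (k + Q) * ((a + b * x) ^ k * y ^ (b * l)) := by
  unfold gsCoef
  simp only [map_mul, map_pow, map_add, map_intCast, map_natCast, hX, hY]
  obtain ⟨d, rfl⟩ := Nat.exists_eq_add_of_le h
  rw [Nat.add_sub_cancel_left, show (c : K) * a + b * (c * x) = c * (a + b * x) by ring,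
    mul_pow, mul_pow]
  ring

lemma gs_coef_house {K : Type*} [Field K] [NumberField K]
    (c : ℤ) (X Y : NumberField.RingOfIntegers K) (H : ℝ) (hH : 1 ≤ H)
    (hc : |(c : ℝ)| + NumberField.house (X : K) ≤ H) (hY : NumberField.house (Y : K) ≤ H)
    (Q k l a b q : ℕ) (h : b * l ≤ Q) (ha : a ≤ q) (hb : b ≤ q) :
    NumberField.house ((gsCoef c X Y Q k l a b : NumberField.RingOfIntegers K) : K) ≤
      (q * H) ^ k * H ^ Q := by
  unfold gsCoef
  simp only [map_mul, map_pow, map_add, map_intCast, map_natCast]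
  have hX0 := NumberField.house_nonneg (X : K)
  have hY0 := NumberField.house_nonneg (Y : K)
  have hc1 : |(c : ℝ)| ≤ H := by linarith
  have hcn : NumberField.house (c : K) = |(c : ℝ)| := by
    rw [NumberField.house_intCast, Int.cast_abs]
  have h1 : NumberField.house ((c : K) * a + b * (X : K)) ≤ q * H := by
    refine (NumberField.house_add_le _ _).trans ?_
    rw [mul_comm (c : K), NumberField.house_nat_mul, NumberField.house_nat_mul, hcn]
    have ha' : (a : ℝ) ≤ q := by exact_mod_cast ha
    have hb' : (b : ℝ) ≤ q := by exact_mod_cast hb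
    calc _ ≤ (q : ℝ) * |(c : ℝ)| + q * NumberField.house (X : K) := by gcongr
      _ = q * (|(c : ℝ)| + NumberField.house (X : K)) := by ring
      _ ≤ _ := by gcongr
  have h2 : NumberField.house ((c : K) ^ (Q - b * l)) ≤ H ^ (Q - b * l) := by
    refine (NumberField.house_pow_le _ _).trans ?_
    rw [hcn]; gcongr
  have h3 : NumberField.house ((Y : K) ^ (b * l)) ≤ H ^ (b * l) := by
    refine (NumberField.house_pow_le _ _).trans ?_
    gcongr
  have h4 : NumberField.house (((c : K) * a + b * (X : K)) ^ k) ≤ (q * H) ^ k := by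
    refine (NumberField.house_pow_le _ _).trans ?_
    have := NumberField.house_nonneg ((c : K) * a + b * (X : K))
    gcongr
  refine (NumberField.house_mul_le _ _).trans ?_
  apply mul_le_mul h4 _ (NumberField.house_nonneg _) (by positivity)
  refine (NumberField.house_mul_le _ _).trans ?_
  calc _ ≤ H ^ (Q - b * l) * H ^ (b * l) :=
        mul_le_mul h2 h3 (NumberField.house_nonneg _) (by positivity)
    _ = H ^ Q := by rw [← pow_add, Nat.sub_add_cancel h]

lemma gs_liouville {K : Type*} [Field K] [NumberField K] (σ : K →+* ℂ)
    (ρ : NumberField.RingOfIntegers K) (hρ : ρ ≠ 0) (D : ℝ)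
    (hD : NumberField.house (ρ : K) ≤ D) :
    1 ≤ ‖σ (ρ : K)‖ * D ^ (Module.finrank ℚ K - 1) := by
  have h1 := NumberField.norm_norm_le_norm_mul_house_pow (ρ : K) σ
  have h0 := NumberField.house_nonneg (ρ : K)
  have h2 : (1 : ℝ) ≤ ‖Algebra.norm ℚ (ρ : K)‖ := by
    rw [← Algebra.coe_norm_int]
    have : Algebra.norm ℤ ρ ≠ 0 := by
      rwa [Ne, Algebra.norm_eq_zero_iff]
    have h3 : (1 : ℤ) ≤ |Algebra.norm ℤ ρ| := Int.one_le_abs this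
    rw [← Rat.norm_cast_real, Real.norm_eq_abs]
    push_cast
    exact_mod_cast h3
  refine h2.trans (h1.trans ?_)
  gcongr

/-- Final numerical contradiction. -/
lemma gs_numeric (h m r q : ℕ) (hh : 1 ≤ h) (hm : m = 12 * h + 19) (hr : 2 ≤ r) (hq : 0 < q)
    (hqr : q ^ 2 ≤ 2 * m * r) (S : ℝ)
    (hS : S ≤ (r : ℝ) ^ (9 * r) / ((m : ℝ) * r / q) ^ (m * r))
    (h1 : 1 ≤ S * ((r : ℝ) ^ (6 * r)) ^ (h - 1)) : False := by
  have hq' : (0 : ℝ) < q := by exact_mod_cast hq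
  have hr' : (2 : ℝ) ≤ r := by exact_mod_cast hr
  have hm' : (2 : ℝ) ≤ m := by rw [hm]; push_cast; linarith [(Nat.cast_nonneg h : (0 : ℝ) ≤ h)]
  set U : ℝ := (m : ℝ) * r / q with hU
  have hU0 : 0 < U := by positivity
  have hqr' : (q : ℝ) ^ 2 ≤ 2 * m * r := by exact_mod_cast hqr
  have hU2 : (r : ℝ) ≤ U ^ 2 := by
    rw [hU, div_pow, le_div_iff₀ (by positivity)]
    calc (r : ℝ) * q ^ 2 ≤ r * (2 * m * r) := by gcongr
      _ = 2 * (m * r ^ 2) := by ring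
      _ ≤ m * (m * r ^ 2) := by gcongr
      _ = _ := by ring
  have h2 : U ^ (m * r) ≤ (r : ℝ) ^ (9 * r + 6 * r * (h - 1)) := by
    have h3 := h1.trans (mul_le_mul_of_nonneg_right hS (by positivity))
    rw [div_mul_eq_mul_div, le_div_iff₀ (by positivity), one_mul, ← pow_mul, ← pow_add] at h3
    exact h3
  have h4 : (r : ℝ) ^ (m * r) ≤ (r : ℝ) ^ (2 * (9 * r + 6 * r * (h - 1))) := by
    calc (r : ℝ) ^ (m * r) ≤ (U ^ 2) ^ (m * r) := by gcongr
      _ = (U ^ (m * r)) ^ 2 := by rw [← pow_mul, ← pow_mul, mul_comm]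
      _ ≤ ((r : ℝ) ^ (9 * r + 6 * r * (h - 1))) ^ 2 := by gcongr
      _ = _ := by rw [← pow_mul, mul_comm]
  rw [pow_le_pow_iff_right₀ (by linarith)] at h4
  obtain ⟨e, rfl⟩ := Nat.exists_eq_add_of_le hh
  rw [hm, Nat.add_sub_cancel_left] at h4
  nlinarith

lemma gs_exp_val (s y : ℂ) (hy : y = Complex.exp (2 * Real.pi * Complex.I * s)) (a b l : ℕ) :
    Complex.exp (2 * Real.pi * Complex.I * (a + b * s) * l) = y ^ (b * l) := by
  rw [hy, ← Complex.exp_nat_mul]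
  rw [show 2 * Real.pi * Complex.I * (a + b * s) * l =
    ((b * l : ℕ) : ℂ) * (2 * Real.pi * Complex.I * s) + ((a * l : ℕ) : ℂ) *
      (2 * Real.pi * Complex.I) by push_cast; ring, Complex.exp_add,
    Complex.exp_nat_mul_two_pi_mul_I, mul_one]

lemma gs_key {K : Type*} [Field K] [NumberField K] (σ : K →+* ℂ) (x y : K)
    (hy : σ y = Complex.exp (2 * Real.pi * Complex.I * σ x))
    (c : ℤ) (X Y : NumberField.RingOfIntegers K) (hX : (X : K) = c * x)
    (hY : (Y : K) = c * y) (q m : ℕ) (ξ : Fin q × Fin q → NumberField.RingOfIntegers K)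
    (k l : ℕ) (hl : l < m) :
    (2 * Real.pi * Complex.I) ^ k * σ ((∑ i, gsCoef c X Y (q * m) k l i.1 i.2 * ξ i :
        NumberField.RingOfIntegers K) : K) =
      (c : ℂ) ^ (k + q * m) * iteratedDeriv k (fun z => ∑ i, σ (ξ i : K) *
        Complex.exp (2 * Real.pi * Complex.I * ((i.1 : ℕ) + (i.2 : ℕ) * σ x) * z)) (l : ℂ) := by
  rw [gs_iterDeriv (fun i => σ (ξ i : K))]
  change _ * σ (algebraMap (NumberField.RingOfIntegers K) K _) = _
  rw [map_sum, map_sum, Finset.mul_sum, Finset.mul_sum]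
  apply Finset.sum_congr rfl
  intro i _
  have hce := gs_coef_eq c X Y x y hX hY (q * m) k l i.1 i.2 (Nat.mul_le_mul i.2.2.le hl.le)
  change algebraMap (NumberField.RingOfIntegers K) K _ = _ at hce
  rw [gs_exp_val (σ x) (σ y) hy, map_mul, hce]
  simp only [map_mul, map_pow, map_add, map_intCast, map_natCast]
  rw [mul_pow (2 * (Real.pi : ℂ) * Complex.I) _ k]
  ring

lemma gs_core {K : Type*} [Field K] [NumberField K] (σ : K →+* ℂ) (x y : K)
    (hinj : ∀ a b a' b' : ℕ, (a : K) + b * x = a' + b' * x → a = a' ∧ b = b')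
    (hy : σ y = Complex.exp (2 * Real.pi * Complex.I * σ x)) : False := by
  classical
  obtain ⟨c, X, Y, hc, hX, hY⟩ := gs_int K x y
  obtain ⟨C, hC⟩ := gs_siegel K
  set h := Module.finrank ℚ K with hh
  have hh1 : 1 ≤ h := Module.finrank_pos
  obtain ⟨m, hm⟩ : ∃ m, m = 12 * h + 19 := ⟨_, rfl⟩
  have hX0 := NumberField.house_nonneg (X : K)
  have hY0 := NumberField.house_nonneg (Y : K)
  obtain ⟨H, hH⟩ : ∃ H : ℝ, H = 1 + |(c : ℝ)| + NumberField.house (X : K) +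
    NumberField.house (Y : K) := ⟨_, rfl⟩
  have hc0 := abs_nonneg (c : ℝ)
  have hH1 : 1 ≤ H := by linarith
  have hHc : |(c : ℝ)| ≤ H := by linarith
  obtain ⟨t, ht⟩ := exists_nat_ge (|C| + H + Real.exp (2 * Real.pi * (1 + ‖σ x‖) * (2 * m)) +
    (m : ℝ) ^ m + m + 4)
  have hE0 := Real.exp_pos (2 * Real.pi * (1 + ‖σ x‖) * (2 * m))
  have hC0 := abs_nonneg C
  have hm0 : (0 : ℝ) ≤ m := Nat.cast_nonneg m
  have hmm0 : (0 : ℝ) ≤ (m : ℝ) ^ m := by positivity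
  have ht1 : |C| ≤ t := by linarith
  have ht2 : H ≤ t := by linarith
  have ht3 : Real.exp (2 * Real.pi * (1 + ‖σ x‖) * (2 * m)) ≤ t := by linarith
  have ht4 : (m : ℝ) ^ m ≤ t := by linarith
  have ht5 : m ≤ t := by
    have : (m : ℝ) ≤ t := by linarith
    exact_mod_cast this
  have ht6 : 4 ≤ t := by
    have : (4 : ℝ) ≤ t := by linarith
    exact_mod_cast this
  clear ht
  obtain ⟨n, hn⟩ : ∃ n, n = 2 * m * t ^ 2 := ⟨_, rfl⟩
  obtain ⟨q, hq⟩ : ∃ q, q = 2 * m * t := ⟨_, rfl⟩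
  have hqt : q * t = n := by rw [hn, hq]; ring
  have hq2 : q ^ 2 = 2 * m * n := by rw [hn, hq]; ring
  have hm19 : 19 ≤ m := by omega
  have hq0 : 0 < q := by rw [hq]; positivity
  have htn : t ≤ n := by rw [← hqt]; exact Nat.le_mul_of_pos_left t hq0
  have hqn : q ≤ n := by rw [← hqt]; exact Nat.le_mul_of_pos_right q (by omega)
  have hqm : q * m ≤ n := by rw [← hqt]; exact Nat.mul_le_mul_left q ht5
  have hn4 : 4 ≤ n := by omega
  have htn' : (t : ℝ) ≤ n := by exact_mod_cast htn
  have hqn' : (q : ℝ) ≤ n := by exact_mod_cast hqn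
  have hn4' : (4 : ℝ) ≤ n := by exact_mod_cast hn4
  have hqH : q * H ≤ n := by
    rw [← hqt]; push_cast; gcongr
  have hHn : H ≤ n := ht2.trans htn'
  have hcoef : ∀ r : ℕ, n ≤ r → ∀ k ≤ r, ∀ l < m, ∀ i : Fin q × Fin q,
      NumberField.house ((gsCoef c X Y (q * m) k l i.1 i.2 : NumberField.RingOfIntegers K) : K) ≤
        (r : ℝ) ^ (2 * r) := by
    intro r hr k hk l hl i
    have hr' : (n : ℝ) ≤ r := by exact_mod_cast hr
    have hr1 : (1 : ℝ) ≤ r := by linarith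
    refine (gs_coef_house c X Y H hH1 (by linarith) (by linarith) (q * m) k l i.1 i.2 q
      (Nat.mul_le_mul i.2.2.le hl.le) i.1.2.le i.2.2.le).trans ?_
    calc (q * H) ^ k * H ^ (q * m) ≤ (r : ℝ) ^ k * (r : ℝ) ^ (q * m) := by
          gcongr
          · exact hqH.trans hr'
          · exact hHn.trans hr'
      _ ≤ (r : ℝ) ^ r * (r : ℝ) ^ r := by
          gcongr
          exact hqm.trans hr
      _ = _ := by rw [← pow_add]; congr 1; ring
  obtain ⟨ξ, hξ0, hξM, hξb⟩ := hC (Fin n × Fin m) (Fin q × Fin q)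
    (fun k i => gsCoef c X Y (q * m) k.1 k.2 i.1 i.2) ((n : ℝ) ^ (2 * n))
    (by
      intro h0
      have h1 := congrFun (congrFun h0 (⟨0, by omega⟩, ⟨0, by omega⟩)) (⟨0, hq0⟩, ⟨0, hq0⟩)
      simp [gsCoef] at h1
      exact hc (by exact_mod_cast h1.1))
    (by simp only [Fintype.card_prod, Fintype.card_fin]; positivity)
    (by simp only [Fintype.card_prod, Fintype.card_fin]; rw [← sq, hq2]; ring)
    (fun k i => hcoef n le_rfl k.1 k.1.2.le k.2 k.2.2 i)
  set ρ : ℕ → ℕ → NumberField.RingOfIntegers K := fun k l =>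
    ∑ i, gsCoef c X Y (q * m) k l i.1 i.2 * ξ i with hρ
  have hρ0 : ∀ k < n, ∀ l < m, ρ k l = 0 := by
    intro k hk l hl
    exact congrFun hξM (⟨k, hk⟩, ⟨l, hl⟩)
  have hex : ∃ r, ∃ l < m, ρ r l ≠ 0 := by
    by_contra! hcon
    have hv := gs_vandermonde (K := K) (fun i : Fin q × Fin q => ((i.1 : ℕ) : K) + (i.2 : ℕ) * x)
      (by
        rintro ⟨a, b⟩ ⟨a', b'⟩ hab
        obtain ⟨h1, h2⟩ := hinj _ _ _ _ hab
        exact Prod.ext (Fin.ext h1) (Fin.ext h2)) (fun i => (ξ i : K)) (by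
        intro k
        have h1 := congrArg (algebraMap (NumberField.RingOfIntegers K) K) (hcon k 0 (by omega))
        simp only [hρ, map_sum, map_mul, map_zero] at h1
        have hcK : (c : K) ^ (k + q * m) ≠ 0 := pow_ne_zero _ (by exact_mod_cast hc)
        apply mul_left_cancel₀ hcK
        rw [mul_zero, ← h1, Finset.mul_sum]
        apply Finset.sum_congr rfl
        intro i _
        have hce := gs_coef_eq c X Y x y hX hY (q * m) k 0 i.1 i.2 (by simp)
        change algebraMap (NumberField.RingOfIntegers K) K _ = _ at hce
        rw [hce]
        simp only [mul_zero, pow_zero, mul_one]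
        ring)
    apply hξ0
    ext i
    simpa using congrFun hv i
  obtain ⟨l₀, hl₀, hρne⟩ := Nat.find_spec hex
  have hmin : ∀ k < Nat.find hex, ∀ l < m, ρ k l = 0 := by
    intro k hk l hl
    have := Nat.find_min hex hk
    push Not at this
    exact this l hl
  generalize Nat.find hex = r at hρne hmin
  have hnr : n ≤ r := by
    by_contra! hlt
    exact hρne (hρ0 r hlt l₀ hl₀)
  have hnr' : (n : ℝ) ≤ r := by exact_mod_cast hnr
  have hr4 : (4 : ℝ) ≤ r := by linarith
  have hr4n : 4 ≤ r := by omega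
  have hr1 : (1 : ℝ) ≤ r := by linarith
  have hcard : (Fintype.card (Fin q × Fin q) : ℝ) ≤ (r : ℝ) ^ 2 := by
    simp only [Fintype.card_prod, Fintype.card_fin]
    push_cast
    rw [← sq]
    gcongr
    linarith
  have hξr : ∀ i, NumberField.house (ξ i : K) ≤ (r : ℝ) ^ (3 * r) := by
    intro i
    refine (hξb i).trans ?_
    have hCr : |C| ≤ r := by linarith
    calc C * (C * (Fintype.card (Fin q × Fin q) : ℝ) * (n : ℝ) ^ (2 * n))
        = |C| * (|C| * (Fintype.card (Fin q × Fin q) : ℝ) * (n : ℝ) ^ (2 * n)) := by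
          rw [← mul_assoc, ← mul_assoc, ← mul_assoc, ← mul_assoc, abs_mul_abs_self]
      _ ≤ r * (r * r ^ 2 * (r : ℝ) ^ (2 * n)) := by gcongr
      _ = (r : ℝ) ^ (4 + 2 * n) := by ring
      _ ≤ _ := by
        apply pow_le_pow_right₀ hr1
        omega
  have hρh : NumberField.house (ρ r l₀ : K) ≤ (r : ℝ) ^ (6 * r) := by
    simp only [hρ, map_sum, map_mul]
    refine (NumberField.house_sum_le_sum_house _ _).trans ?_
    calc _ ≤ ∑ i : Fin q × Fin q, (r : ℝ) ^ (2 * r) * (r : ℝ) ^ (3 * r) := by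
          apply Finset.sum_le_sum
          intro i _
          refine (NumberField.house_mul_le _ _).trans ?_
          exact mul_le_mul (hcoef r hnr r le_rfl l₀ hl₀ i) (hξr i) (NumberField.house_nonneg _)
            (by positivity)
      _ = (Fintype.card (Fin q × Fin q) : ℝ) * ((r : ℝ) ^ (2 * r) * (r : ℝ) ^ (3 * r)) := by
          rw [Finset.sum_const, nsmul_eq_mul, Finset.card_univ]
      _ ≤ (r : ℝ) ^ 2 * ((r : ℝ) ^ (2 * r) * (r : ℝ) ^ (3 * r)) := by gcongr
      _ = (r : ℝ) ^ (2 + 5 * r) := by ring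
      _ ≤ _ := by
        apply pow_le_pow_right₀ hr1
        omega
  have hL := gs_liouville σ (ρ r l₀) hρne _ hρh
  set F : ℂ → ℂ := fun z => ∑ i : Fin q × Fin q, σ (ξ i : K) *
        Complex.exp (2 * Real.pi * Complex.I * ((i.1 : ℕ) + (i.2 : ℕ) * σ x) * z) with hFdef
  have hF : Differentiable ℂ F := by
    rw [hFdef]; fun_prop
  have hcC : (c : ℂ) ≠ 0 := by exact_mod_cast hc
  have hkey : ∀ k l, l < m → (2 * Real.pi * Complex.I) ^ k * σ (ρ k l : K) =
      (c : ℂ) ^ (k + q * m) * iteratedDeriv k F (l : ℂ) := fun k l hl =>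
    gs_key σ x y hy c X Y hX hY q m ξ k l hl
  have hFz : ∀ l < m, ∀ k < r, iteratedDeriv k F (l : ℂ) = 0 := by
    intro l hl k hk
    have h1 := hkey k l hl
    rw [hmin k hk l hl] at h1
    change _ * σ (algebraMap (NumberField.RingOfIntegers K) K 0) = _ at h1
    rw [map_zero, map_zero, mul_zero] at h1
    rcases mul_eq_zero.1 h1.symm with h2 | h2
    · exact absurd h2 (pow_ne_zero _ hcC)
    · exact h2
  have hq' : (0 : ℝ) < q := by exact_mod_cast hq0
  have hm' : (0 : ℝ) < m := by exact_mod_cast (by omega : 0 < m)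
  obtain ⟨R, hR⟩ : ∃ R : ℝ, R = m + m * r / q := ⟨_, rfl⟩
  have hRm : R - m = m * r / q := by rw [hR]; ring
  have hmR : (m : ℝ) < R := by
    have : 0 < (m : ℝ) * r / q := by positivity
    linarith
  have hqR : q * R ≤ 2 * m * r := by
    rw [hR]
    have : (q : ℝ) * (m + m * r / q) = m * q + m * r := by field_simp
    rw [this]
    have : (m : ℝ) * q ≤ m * r := by gcongr; linarith
    linarith
  have hB : ∀ z : ℂ, ‖z‖ = R → ‖F z‖ ≤ (r : ℝ) ^ (5 * r) := by
    intro z hz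
    have hterm : ∀ i : Fin q × Fin q, ‖σ (ξ i : K) *
        Complex.exp (2 * Real.pi * Complex.I * ((i.1 : ℕ) + (i.2 : ℕ) * σ x) * z)‖ ≤
        (r : ℝ) ^ (3 * r) * (r : ℝ) ^ r := by
      intro i
      rw [norm_mul]
      apply mul_le_mul ((NumberField.norm_embedding_le_house _ σ).trans (hξr i)) _
        (norm_nonneg _) (by positivity)
      refine (Complex.norm_exp_le_exp_norm _).trans ?_
      have hn1 : ‖2 * Real.pi * Complex.I * ((i.1 : ℕ) + (i.2 : ℕ) * σ x) * z‖ ≤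
          r * (2 * Real.pi * (1 + ‖σ x‖) * (2 * m)) := by
        have hw : ‖((i.1 : ℕ) : ℂ) + (i.2 : ℕ) * σ x‖ ≤ q * (1 + ‖σ x‖) := by
          refine (norm_add_le _ _).trans ?_
          rw [norm_mul, Complex.norm_natCast, Complex.norm_natCast]
          have h1 : ((i.1 : ℕ) : ℝ) ≤ q := by exact_mod_cast i.1.2.le
          have h2 : ((i.2 : ℕ) : ℝ) ≤ q := by exact_mod_cast i.2.2.le
          calc _ ≤ (q : ℝ) + q * ‖σ x‖ := by gcongr
            _ = _ := by ring
        have h2pi : ‖(2 * Real.pi * Complex.I : ℂ)‖ = 2 * Real.pi := by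
          simp [abs_of_pos Real.pi_pos]
        rw [norm_mul, norm_mul, h2pi, hz]
        have hR0 : 0 ≤ R := by linarith
        calc _ ≤ 2 * Real.pi * (q * (1 + ‖σ x‖)) * R := by gcongr
          _ = 2 * Real.pi * (1 + ‖σ x‖) * (q * R) := by ring
          _ ≤ 2 * Real.pi * (1 + ‖σ x‖) * (2 * m * r) := by gcongr
          _ = _ := by ring
      calc _ ≤ Real.exp (r * (2 * Real.pi * (1 + ‖σ x‖) * (2 * m))) := Real.exp_le_exp.2 hn1
        _ = Real.exp (2 * Real.pi * (1 + ‖σ x‖) * (2 * m)) ^ r := Real.exp_nat_mul _ _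
        _ ≤ (r : ℝ) ^ r := by gcongr; linarith
    calc ‖F z‖ ≤ ∑ i : Fin q × Fin q, (r : ℝ) ^ (3 * r) * (r : ℝ) ^ r :=
          norm_sum_le_of_le _ (fun i _ => hterm i)
      _ = (Fintype.card (Fin q × Fin q) : ℝ) * ((r : ℝ) ^ (3 * r) * (r : ℝ) ^ r) := by
          rw [Finset.sum_const, nsmul_eq_mul, Finset.card_univ]
      _ ≤ (r : ℝ) ^ 2 * ((r : ℝ) ^ (3 * r) * (r : ℝ) ^ r) := by gcongr
      _ = (r : ℝ) ^ (2 + 4 * r) := by ring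
      _ ≤ _ := by
        apply pow_le_pow_right₀ hr1
        omega
  have hA := gs_analytic F hF m r hFz R _ hmR hB l₀ hl₀
  rw [hRm] at hA
  refine gs_numeric h m r q hh1 hm (by omega) hq0 ?_ ‖σ (ρ r l₀ : K)‖ ?_ hL
  · rw [hq2]; gcongr
  · have hk := congrArg norm (hkey r l₀ hl₀)
    rw [norm_mul, norm_mul, norm_pow, norm_pow, Complex.norm_intCast] at hk
    have h2pi : (1 : ℝ) ≤ ‖(2 * Real.pi * Complex.I : ℂ)‖ := by
      have : ‖(2 * Real.pi * Complex.I : ℂ)‖ = 2 * Real.pi := by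
        simp [abs_of_pos Real.pi_pos]
      rw [this]; linarith [Real.pi_gt_three]
    have hfac : (r.factorial : ℝ) ≤ (r : ℝ) ^ r := by exact_mod_cast Nat.factorial_le_pow r
    have hmm : (m : ℝ) ^ (m * r) ≤ (r : ℝ) ^ r := by
      rw [pow_mul]; gcongr; linarith
    have hcr : |(c : ℝ)| ^ (r + q * m) ≤ (r : ℝ) ^ (2 * r) := by
      calc |(c : ℝ)| ^ (r + q * m) ≤ (r : ℝ) ^ (r + q * m) := by gcongr; linarith
        _ ≤ _ := by apply pow_le_pow_right₀ hr1; omega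
    calc ‖σ (ρ r l₀ : K)‖ ≤ ‖(2 * Real.pi * Complex.I : ℂ)‖ ^ r * ‖σ (ρ r l₀ : K)‖ :=
          le_mul_of_one_le_left (norm_nonneg _) (one_le_pow₀ h2pi)
      _ = |(c : ℝ)| ^ (r + q * m) * ‖iteratedDeriv r F (l₀ : ℂ)‖ := hk
      _ ≤ (r : ℝ) ^ (2 * r) * ((r : ℝ) ^ r * ((r : ℝ) ^ r * ((r : ℝ) ^ (5 * r) /
            ((m : ℝ) * r / q) ^ (m * r)))) := by
          apply mul_le_mul hcr _ (norm_nonneg _) (by positivity)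
          refine hA.trans ?_
          gcongr
      _ = _ := by
          rw [← mul_div_assoc, ← mul_div_assoc, ← mul_div_assoc]
          congr 1
          ring

/-- If `α` is a real algebraic number which is irrational, then
`e^{2πiα}` is transcendental over `ℚ` (Gelfond–Schneider). -/
theorem exp_two_pi_I_algebraic_irrational_transcendental
    (α : ℝ) (halg : IsAlgebraic ℚ α) (hirr : Irrational α) :
    Transcendental ℚ (Complex.exp (2 * Real.pi * Complex.I * α)) := by
  intro hγ
  have hα : IsAlgebraic ℚ (α : ℂ) := halg.algebraMap (A := ℂ)
  set γ := Complex.exp (2 * Real.pi * Complex.I * α) with hγdef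
  let K := IntermediateField.adjoin ℚ ({(α : ℂ), γ} : Set ℂ)
  have hfd : FiniteDimensional ℚ K := by
    apply IntermediateField.finiteDimensional_adjoin
    intro z hz
    rcases hz with rfl | rfl
    · exact hα.isIntegral
    · exact hγ.isIntegral
  have : NumberField K := { to_charZero := inferInstance, to_finiteDimensional := hfd }
  have hαK : (α : ℂ) ∈ K := IntermediateField.subset_adjoin _ _ (by simp)
  have hγK : γ ∈ K := IntermediateField.subset_adjoin _ _ (by simp)
  refine gs_core (K := K) (algebraMap K ℂ) ⟨α, hαK⟩ ⟨γ, hγK⟩ ?_ hγdef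
  intro a b a' b' hab
  have h1 : ((a : ℂ) + b * α) = a' + b' * α := by
    have := congrArg (algebraMap K ℂ) hab
    simpa using this
  have h2 : ((a : ℝ) + b * α) = a' + b' * α := by exact_mod_cast h1
  have hb : b = b' := by
    by_contra hne
    have h3 : ((b : ℤ) - (b' : ℤ) : ℤ) ≠ 0 := by omega
    have h4 := (hirr.intCast_mul h3).ne_int ((a' : ℤ) - a)
    apply h4
    push_cast
    linarith
  subst hb
  refine ⟨?_, rfl⟩
  have : (a : ℝ) = a' := by linarith
  exact_mod_cast this
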